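/- Let h > 0, b_0 > 0, and let u_0 : [0, ∞) → ℝ satisfy u_0(0) > 0 and u_0(η) ≥ u_0(0) − M·η for all η ∈ [0, b_0], where M > 0. Fix 0 < h̃ ≤ h. Then there exists Λ > 1 such that for all λ ≥ Λ: b_λ < min(b_0, u_0(0)/M), U_λ(0) < u_0(0), and U_λ(η) ≤ u_0(η) for all η ∈ [0, b_λ]; in particular, for such λ the time-independent pair (U_λ, b_λ) is a lower solution of problem (2.1) with data (h, u_0, b_0). -/

import Mathlib

/-- A time-independent pair `(W, b)` is a lower solution of problem (2.1) with
data `(h, u0, b0)`: `-(W'' + (η/2) W') ≤ 0` on `(0, b)`, `-W'(0) ≤ h`,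
`W b = 0`, `b/2 ≤ -W'(b)`, `b ≤ b0`, and `W ≤ u0` on `[0, b]`. -/
def IsTIStatLowerSol (h b0 : ℝ) (u0 : ℝ → ℝ) (W : ℝ → ℝ) (b : ℝ) : Prop :=
  (∀ η ∈ Set.Ioo 0 b, -(deriv (deriv W) η + η / 2 * deriv W η) ≤ 0) ∧
  (-deriv W 0 ≤ h) ∧ (W b = 0) ∧ (b / 2 ≤ -deriv W b) ∧ (b ≤ b0) ∧
  (∀ η ∈ Set.Icc 0 b, W η ≤ u0 η)

/-- Lemma 2.6: for `0 < h̃ ≤ h`, `u0` with `u0 0 > 0` and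
`u0 η ≥ u0 0 - M η` on `[0, b0]`, there is `Λ > 1` such that for every
`λ ≥ Λ`: `b_λ < min b0 (u0 0 / M)`, `U_λ(0) < u0 0`, `U_λ ≤ u0` on `[0, b_λ]`,
and `(U_λ, b_λ)` is a time-independent lower solution of (2.1) with data
`(h, u0, b0)`. -/
theorem lower_solution_for_large_lambda
    (h b0 M htil : ℝ) (hh : 0 < h) (hb0 : 0 < b0) (hM : 0 < M)
    (u0 : ℝ → ℝ) (hu00 : 0 < u0 0)
    (hu0lin : ∀ η ∈ Set.Icc 0 b0, u0 0 - M * η ≤ u0 η)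
    (hhtil : 0 < htil) (hhtilh : htil ≤ h)
    (B : ℝ → ℝ)
    (hB : ∀ lam > (0:ℝ), 0 < B lam ∧
      htil = B lam / 2 * Real.exp (lam * B lam ^ 2 / 4)) :
    ∃ Λ : ℝ, 1 < Λ ∧ ∀ lam ≥ Λ,
      B lam < min b0 (u0 0 / M) ∧
      htil * (∫ s in (0:ℝ)..B lam, Real.exp (-(lam * s ^ 2) / 4)) < u0 0 ∧
      (∀ η ∈ Set.Icc 0 (B lam),
        htil * (∫ s in η..B lam, Real.exp (-(lam * s ^ 2) / 4)) ≤ u0 η) ∧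
      IsTIStatLowerSol h b0 u0
        (fun η => htil * ∫ s in η..B lam, Real.exp (-(lam * s ^ 2) / 4))
        (B lam) := by
  obtain ⟨δ, hδ, hδb, hδu⟩ : ∃ δ : ℝ, 0 < δ ∧ δ ≤ b0 ∧ (M + htil) * δ ≤ u0 0 := by
    have hp : 0 < M + htil := by positivity
    refine ⟨min b0 (u0 0 / (M + htil)), lt_min hb0 (by positivity), min_le_left _ _, ?_⟩
    have := min_le_right b0 (u0 0 / (M + htil))
    rw [le_div_iff₀ hp] at this
    linarith
  refine ⟨8 * htil / δ ^ 3 + 2, by have : 0 < 8 * htil / δ ^ 3 := by positivity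
                                   linarith, ?_⟩
  intro lam hlam
  have hq : 0 < 8 * htil / δ ^ 3 := by positivity
  have hlam1 : 1 < lam := by linarith
  have hlam0 : 0 < lam := by linarith
  obtain ⟨hb, hbeq⟩ := hB lam hlam0
  generalize B lam = b at hb hbeq ⊢
  have hbδ : b < δ := by
    by_contra hcon
    push Not at hcon
    have h1 : lam * δ ^ 2 / 4 ≤ lam * b ^ 2 / 4 := by gcongr
    have h2 : lam * δ ^ 2 / 4 ≤ Real.exp (lam * b ^ 2 / 4) := by
      have := Real.add_one_le_exp (lam * b ^ 2 / 4)
      linarith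
    have h3 : δ / 2 * (lam * δ ^ 2 / 4) ≤ htil := by
      rw [hbeq]
      gcongr
    have h4 : 8 * htil / δ ^ 3 < lam := by linarith
    rw [div_lt_iff₀ (by positivity)] at h4
    nlinarith
  have hcont : Continuous (fun s : ℝ => Real.exp (-(lam * s ^ 2) / 4)) := by fun_prop
  have hint : ∀ η ∈ Set.Icc 0 b,
      (∫ s in η..b, Real.exp (-(lam * s ^ 2) / 4)) ≤ b - η := by
    intro η hη
    have := intervalIntegral.integral_mono_on (μ := MeasureTheory.volume) hη.2
      (hcont.intervalIntegrable η b)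
      ((continuous_const (y := (1:ℝ))).intervalIntegrable η b) (by
        intro x _
        rw [Real.exp_le_one_iff]
        have : 0 ≤ lam * x ^ 2 := by positivity
        linarith)
    simpa using this
  have hMb : (M + htil) * b < u0 0 := by
    have : (M + htil) * b < (M + htil) * δ := by gcongr
    linarith
  have hle : ∀ η ∈ Set.Icc 0 b,
      htil * (∫ s in η..b, Real.exp (-(lam * s ^ 2) / 4)) ≤ u0 η := by
    intro η hη
    have h1 := mul_le_mul_of_nonneg_left (hint η hη) hhtil.le
    have h2 := hu0lin η ⟨hη.1, by linarith [hη.2]⟩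
    have h3 := mul_le_mul_of_nonneg_left hη.2 hM.le
    have h4 := mul_nonneg hhtil.le hη.1
    linarith
  have hd : ∀ η : ℝ, HasDerivAt
      (fun η => htil * ∫ s in η..b, Real.exp (-(lam * s ^ 2) / 4))
      (htil * -Real.exp (-(lam * η ^ 2) / 4)) η := fun η =>
    (intervalIntegral.integral_hasDerivAt_left (hcont.intervalIntegrable η b)
      (hcont.stronglyMeasurableAtFilter _ _) hcont.continuousAt).const_mul htil
  have hd1 : deriv (fun η => htil * ∫ s in η..b, Real.exp (-(lam * s ^ 2) / 4))
      = fun η => htil * -Real.exp (-(lam * η ^ 2) / 4) := funext fun η => (hd η).deriv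
  have hd2 : ∀ η : ℝ, HasDerivAt (fun η : ℝ => htil * -Real.exp (-(lam * η ^ 2) / 4))
      (htil * (lam * η / 2 * Real.exp (-(lam * η ^ 2) / 4))) η := by
    intro η
    have := (((((hasDerivAt_id η).pow 2).const_mul lam).neg.div_const 4).exp.neg).const_mul htil
    refine this.congr_deriv ?_
    simp
    ring
  refine ⟨lt_min (by linarith) ?_, ?_, hle, ?_, ?_, ?_, ?_, by linarith, hle⟩
  · rw [lt_div_iff₀ hM]
    have := mul_pos hhtil hb
    linarith
  · have h1 := mul_le_mul_of_nonneg_left (hint 0 ⟨le_rfl, hb.le⟩) hhtil.le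
    have := mul_pos hM hb
    linarith
  · intro η hη
    rw [hd1, (hd2 η).deriv]
    have : 0 ≤ htil * (η / 2 * (lam - 1) * Real.exp (-(lam * η ^ 2) / 4)) := by
      have := hη.1
      have : 0 < lam - 1 := by linarith
      positivity
    linarith
  · rw [hd1]
    simpa using hhtilh
  · simp
  · rw [hd1]
    have : Real.exp (lam * b ^ 2 / 4) * Real.exp (-(lam * b ^ 2) / 4) = 1 := by
      rw [← Real.exp_add, ← Real.exp_zero]
      congr 1
      ring
    have h2 : htil * Real.exp (-(lam * b ^ 2) / 4) = b / 2 := by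
      rw [hbeq, mul_assoc, this, mul_one]
    show b / 2 ≤ -(htil * -Real.exp (-(lam * b ^ 2) / 4))
    linarith
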